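/- arXiv:2205.12738 — 5 statements merged into one kernel-verified Lean document; each statement's English description precedes it below -/
import Mathlib

section
/- (Cover analogue of the Singleton bound) Let C be a k-dimensional F_q-linear subspace of F_q^{m×n} whose minimum cover distance is d (i.e., d = min{wt_C(A) : A ∈ C, A ≠ 0}). Then k ≤ max{n,m}·(min{n,m} − d + 1). -/
/-- A cover of a matrix `A` is a set of lines (rows, encoded as `Sum.inl`, and
columns, encoded as `Sum.inr`) such that every nonzero entry of `A` lies in one
of these lines. -/
def IsCover {F : Type*} [Field F] {m n : ℕ} (A : Matrix (Fin m) (Fin n) F)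
    (S : Finset (Fin m ⊕ Fin n)) : Prop :=
  ∀ i j, A i j ≠ 0 → Sum.inl i ∈ S ∨ Sum.inr j ∈ S

/-- The cover weight of a matrix: the minimum cardinality of a cover. -/
noncomputable def coverWt {F : Type*} [Field F] {m n : ℕ}
    (A : Matrix (Fin m) (Fin n) F) : ℕ :=
  sInf {c | ∃ S : Finset (Fin m ⊕ Fin n), IsCover A S ∧ S.card = c}

theorem coverWt_le_card {F : Type*} [Field F] {m n : ℕ} {A : Matrix (Fin m) (Fin n) F}
    {S : Finset (Fin m ⊕ Fin n)} (hS : IsCover A S) : coverWt A ≤ S.card :=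
  Nat.sInf_le ⟨S, hS, rfl⟩

theorem exists_isCover_card_eq_coverWt {F : Type*} [Field F] {m n : ℕ}
    (A : Matrix (Fin m) (Fin n) F) : ∃ S, IsCover A S ∧ S.card = coverWt A :=
  Nat.sInf_mem (s := {c | ∃ S : Finset (Fin m ⊕ Fin n), IsCover A S ∧ S.card = c})
    ⟨_, Finset.univ, fun _ _ _ => Or.inl (Finset.mem_univ _), rfl⟩

theorem coverWt_pos {F : Type*} [Field F] {m n : ℕ} {A : Matrix (Fin m) (Fin n) F}
    (hA : A ≠ 0) : 0 < coverWt A := by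
  obtain ⟨S, hS, hcard⟩ := exists_isCover_card_eq_coverWt A
  rw [← hcard, Finset.card_pos, Finset.nonempty_iff_ne_empty]
  rintro rfl
  refine hA (Matrix.ext fun i j => ?_)
  by_contra h
  simpa using hS i j h

theorem coverWt_le_rows {F : Type*} [Field F] {m n : ℕ} (A : Matrix (Fin m) (Fin n) F) :
    coverWt A ≤ m := by
  have h : IsCover A (Finset.univ.disjSum ∅) := fun i j _ => by simp
  simpa using coverWt_le_card h

theorem coverWt_le_cols {F : Type*} [Field F] {m n : ℕ} (A : Matrix (Fin m) (Fin n) F) :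
    coverWt A ≤ n := by
  have h : IsCover A (Finset.disjSum ∅ Finset.univ) := fun i j _ => by simp
  simpa using coverWt_le_card h

/-- If no nonzero matrix of `C` is covered by the rows `R` and the columns `T`, then a matrix
of `C` is determined by its entries outside these lines. -/
theorem finrank_le_card_compl_mul_card_compl {F : Type*} [Field F] {m n : ℕ}
    (C : Submodule F (Matrix (Fin m) (Fin n) F)) (R : Finset (Fin m)) (T : Finset (Fin n))
    (h : ∀ A ∈ C, IsCover A (R.disjSum T) → A = 0) :
    Module.finrank F C ≤ Rᶜ.card * Tᶜ.card := by
  let f : C →ₗ[F] ((↥Rᶜ × ↥Tᶜ) → F) :=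
    { toFun := fun A p => A.1 p.1 p.2
      map_add' := fun _ _ => rfl
      map_smul' := fun _ _ => rfl }
  have hf : Function.Injective f := by
    rw [injective_iff_map_eq_zero]
    intro A hA
    refine Subtype.ext (h A.1 A.2 fun i j hij => ?_)
    by_contra hcov
    simp only [Finset.inl_mem_disjSum, Finset.inr_mem_disjSum, not_or] at hcov
    exact hij (congrFun hA
      (⟨i, Finset.mem_compl.2 hcov.1⟩, ⟨j, Finset.mem_compl.2 hcov.2⟩))
  simpa only [Module.finrank_fintype_fun_eq_card, Fintype.card_prod, Fintype.card_coe]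
    using LinearMap.finrank_le_finrank_of_injective hf

/-- Puncturing a code with cover distance larger than `r + t` at `r` rows and `t` columns. -/
theorem finrank_le_of_add_lt_coverWt {F : Type*} [Field F] {m n r t : ℕ}
    (C : Submodule F (Matrix (Fin m) (Fin n) F)) (hr : r ≤ m) (ht : t ≤ n)
    (h : ∀ A ∈ C, A ≠ 0 → r + t < coverWt A) :
    Module.finrank F C ≤ (m - r) * (n - t) := by
  obtain ⟨R, -, hR⟩ := Finset.exists_subset_card_eq (s := (Finset.univ : Finset (Fin m)))
    (n := r) (by simpa using hr)
  obtain ⟨T, -, hT⟩ := Finset.exists_subset_card_eq (s := (Finset.univ : Finset (Fin n)))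
    (n := t) (by simpa using ht)
  have key := finrank_le_card_compl_mul_card_compl C R T fun A hA hcov => by
    by_contra hne
    have hle := coverWt_le_card hcov
    rw [Finset.card_disjSum, hR, hT] at hle
    exact (h A hA hne).not_ge hle
  simpa [Finset.card_compl, hR, hT] using key

/-- Cover analogue of the Singleton bound: if `C ⊆ F_q^{m×n}` is a `k`-dimensional
linear code of minimum cover distance `d`, then
`k ≤ max{n,m}·(min{n,m} − d + 1)`. -/
theorem cover_singleton_bound {F : Type*} [Field F] [Fintype F] {q m n k d : ℕ}
    (hq : Fintype.card F = q)
    (C : Submodule F (Matrix (Fin m) (Fin n) F))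
    (hk : Module.finrank F C = k)
    (hd : IsLeast {w | ∃ A ∈ C, A ≠ (0 : Matrix (Fin m) (Fin n) F) ∧ coverWt A = w} d) :
    (k : ℤ) ≤ max n m * (min n m - d + 1) := by
  obtain ⟨⟨A, -, hA0, hAd⟩, hmin⟩ := hd
  have hpos : 0 < d := hAd ▸ coverWt_pos hA0
  have hdm : d ≤ m := hAd ▸ coverWt_le_rows A
  have hdn : d ≤ n := hAd ▸ coverWt_le_cols A
  have hwt : ∀ B ∈ C, B ≠ 0 → d ≤ coverWt B := fun B hB hB0 => hmin ⟨B, hB, hB0, rfl⟩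
  subst hk
  rcases le_total m n with hmn | hmn
  · have key := finrank_le_of_add_lt_coverWt (r := d - 1) (t := 0) C (by omega) (by omega)
      fun B hB hB0 => by have := hwt B hB hB0; omega
    rw [max_eq_left (by exact_mod_cast hmn), min_eq_right (by exact_mod_cast hmn)]
    zify [show d - 1 ≤ m by omega, show 1 ≤ d from hpos] at key
    simp only [Nat.sub_zero] at key
    linarith
  · have key := finrank_le_of_add_lt_coverWt (r := 0) (t := d - 1) C (by omega) (by omega)
      fun B hB hB0 => by have := hwt B hB hB0; omega
    rw [max_eq_right (by exact_mod_cast hmn), min_eq_left (by exact_mod_cast hmn)]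
    zify [show d - 1 ≤ n by omega, show 1 ≤ d from hpos] at key
    simp only [Nat.sub_zero] at key
    linarith
end

section
/- Let n ≤ m be positive integers, q a prime power, and 0 < d ≤ n. Then the cardinality V_C(n,m,q,d) of the cover-metric ball of radius d in F_q^{m×n} satisfies q^{m·d} ≤ V_C(n,m,q,d) ≤ (d+1)·2^{(m+n)·H_2(d/(m+n))}·q^{m·d}, where H_2 is the binary entropy function. -/
/-- The binary entropy function `H_2`. -/
noncomputable def H2 (p : ℝ) : ℝ :=
  -p * Real.logb 2 p - (1 - p) * Real.logb 2 (1 - p)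

/-- A binomial coefficient is at most the exponential of the corresponding binary entropy. -/
lemma choose_le_two_rpow_mul_H2 {N d : ℕ} (hd : 0 < d) (hdN : d < N) :
    (N.choose d : ℝ) ≤ 2 ^ ((N : ℝ) * H2 (d / N)) := by
  have hN : (0 : ℝ) < N := by exact_mod_cast hd.trans hdN
  have hdN' : (d : ℝ) < N := by exact_mod_cast hdN
  set p : ℝ := d / N with hp
  have hp0 : 0 < p := by positivity
  have hp1 : 0 < 1 - p := by rw [hp, sub_pos, div_lt_one hN]; exact hdN'
  have hNp : (N : ℝ) * p = d := by rw [hp]; field_simp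
  have hexp : (2 : ℝ) ^ ((N : ℝ) * H2 p) * (p ^ d * (1 - p) ^ (N - d)) = 1 := by
    have h1 : p ^ d = (2 : ℝ) ^ (Real.logb 2 p * d) := by
      rw [Real.rpow_mul (by norm_num), Real.rpow_logb (by norm_num) (by norm_num) hp0,
        Real.rpow_natCast]
    have h2 : (1 - p) ^ (N - d) = (2 : ℝ) ^ (Real.logb 2 (1 - p) * ((N - d : ℕ) : ℝ)) := by
      rw [Real.rpow_mul (by norm_num), Real.rpow_logb (by norm_num) (by norm_num) hp1,
        Real.rpow_natCast]
    rw [h1, h2, ← Real.rpow_add (by norm_num), ← Real.rpow_add (by norm_num),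
      Nat.cast_sub hdN.le, ← hNp, H2]
    ring_nf
    simp
  have hterm : p ^ d * (1 - p) ^ (N - d) * (N.choose d : ℝ) ≤ 1 := by
    calc p ^ d * (1 - p) ^ (N - d) * (N.choose d : ℝ)
        ≤ ∑ k ∈ Finset.range (N + 1), p ^ k * (1 - p) ^ (N - k) * (N.choose k : ℝ) :=
          Finset.single_le_sum (f := fun k => p ^ k * (1 - p) ^ (N - k) * (N.choose k : ℝ))
            (fun k _ => by positivity) (Finset.mem_range.mpr (by omega))
      _ = 1 := by rw [← add_pow]; simp
  have hpos : 0 < p ^ d * (1 - p) ^ (N - d) := by positivity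
  refine le_of_mul_le_mul_left ?_ hpos
  rw [mul_comm _ ((2 : ℝ) ^ _), hexp]
  exact hterm

section Cover

variable {F : Type*} [Field F] {m n d : ℕ}

lemma coverWt_le_iff {A : Matrix (Fin m) (Fin n) F} :
    coverWt A ≤ d ↔ ∃ S, IsCover A S ∧ S.card ≤ d := by
  constructor
  · intro h
    have hne : {c | ∃ S : Finset (Fin m ⊕ Fin n), IsCover A S ∧ S.card = c}.Nonempty :=
      ⟨_, Finset.univ, fun i _ _ => Or.inl (Finset.mem_univ _), rfl⟩
    obtain ⟨S, hS, hc⟩ := Nat.sInf_mem hne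
    exact ⟨S, hS, hc.trans_le h⟩
  · rintro ⟨S, hS, hc⟩
    have hle : coverWt A ≤ S.card := Nat.sInf_le ⟨S, hS, rfl⟩
    exact hle.trans hc

lemma exists_isCover_card_eq {A : Matrix (Fin m) (Fin n) F} (hdmn : d ≤ m + n)
    (h : coverWt A ≤ d) : ∃ S, IsCover A S ∧ S.card = d := by
  obtain ⟨S, hS, hc⟩ := coverWt_le_iff.mp h
  obtain ⟨T, hST, hT⟩ := Finset.exists_superset_card_eq hc (by simpa using hdmn)
  exact ⟨T, fun i j hij => (hS i j hij).imp (@hST _) (@hST _), hT⟩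

/-- The entries of a matrix along a line, padded with zeros to length `m`. -/
def lineEntries (A : Matrix (Fin m) (Fin n) F) : Fin m ⊕ Fin n → Fin m → F
  | Sum.inl i, k => if h : (k : ℕ) < n then A i ⟨k, h⟩ else 0
  | Sum.inr j, k => A k j

lemma lineEntries_injOn (hnm : n ≤ m) (S : Finset (Fin m ⊕ Fin n)) :
    Set.InjOn (fun (A : Matrix (Fin m) (Fin n) F) (s : S) => lineEntries A s)
      {A | IsCover A S} := by
  intro A hA B hB hAB
  have hline : ∀ s ∈ S, ∀ k, lineEntries A s k = lineEntries B s k := fun s hs k =>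
    congrFun (congrFun hAB ⟨s, hs⟩) k
  ext i j
  by_cases hi : Sum.inl i ∈ S
  · simpa [lineEntries] using hline _ hi (Fin.castLE hnm j)
  by_cases hj : Sum.inr j ∈ S
  · exact hline _ hj i
  have hA0 : A i j = 0 := by_contra fun h => (hA i j h).elim hi hj
  have hB0 : B i j = 0 := by_contra fun h => (hB i j h).elim hi hj
  rw [hA0, hB0]

variable [Fintype F]

lemma ncard_isCover_le (hnm : n ≤ m) (S : Finset (Fin m ⊕ Fin n)) :
    {A : Matrix (Fin m) (Fin n) F | IsCover A S}.ncard ≤ Fintype.card F ^ (m * S.card) := by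
  classical
  have h := Set.ncard_le_ncard_of_injOn (t := (Set.univ : Set (S → Fin m → F)))
    _ (fun _ _ => Set.mem_univ _) (lineEntries_injOn (F := F) hnm S)
  refine h.trans_eq ?_
  rw [Set.ncard_univ, Nat.card_eq_fintype_card]
  simp [pow_mul]

lemma ncard_coverBall_le (hnm : n ≤ m) (hdmn : d ≤ m + n) :
    {A : Matrix (Fin m) (Fin n) F | coverWt A ≤ d}.ncard ≤
      (m + n).choose d * Fintype.card F ^ (m * d) := by
  classical
  let P : Finset (Finset (Fin m ⊕ Fin n)) := Finset.univ.powersetCard d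
  have hsub : {A : Matrix (Fin m) (Fin n) F | coverWt A ≤ d} ⊆
      ⋃ S ∈ P, {A | IsCover A S} := by
    intro A hA
    obtain ⟨S, hS, hc⟩ := exists_isCover_card_eq hdmn hA
    exact Set.mem_biUnion (Finset.mem_powersetCard.mpr ⟨Finset.subset_univ _, hc⟩) hS
  calc _ ≤ (⋃ S ∈ P, {A : Matrix (Fin m) (Fin n) F | IsCover A S}).ncard :=
        Set.ncard_le_ncard hsub
    _ ≤ ∑ S ∈ P, {A : Matrix (Fin m) (Fin n) F | IsCover A S}.ncard :=
        Finset.set_ncard_biUnion_le _ _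
    _ ≤ ∑ _S ∈ P, Fintype.card F ^ (m * d) := Finset.sum_le_sum fun S hS =>
        (ncard_isCover_le hnm S).trans_eq (by rw [(Finset.mem_powersetCard.mp hS).2])
    _ = (m + n).choose d * Fintype.card F ^ (m * d) := by simp [P]

lemma le_ncard_coverBall (hdn : d ≤ n) :
    Fintype.card F ^ (m * d) ≤ {A : Matrix (Fin m) (Fin n) F | coverWt A ≤ d}.ncard := by
  classical
  let f : (Fin m → Fin d → F) → Matrix (Fin m) (Fin n) F := fun B i j =>
    if h : (j : ℕ) < d then B i ⟨j, h⟩ else 0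
  have hf : Function.Injective f := by
    intro B C hBC
    ext i k
    simpa [f] using congrFun (congrFun hBC i) (Fin.castLE hdn k)
  have hmem : ∀ B ∈ Set.univ, f B ∈ {A : Matrix (Fin m) (Fin n) F | coverWt A ≤ d} := by
    intro B _
    refine coverWt_le_iff.mpr
      ⟨Finset.univ.image fun k : Fin d => Sum.inr (Fin.castLE hdn k), ?_, ?_⟩
    · intro i j hij
      have hj : (j : ℕ) < d := by
        by_contra h
        simp [f, h] at hij
      exact Or.inr (Finset.mem_image.mpr ⟨⟨j, hj⟩, Finset.mem_univ _, rfl⟩)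
    · exact Finset.card_image_le.trans (by simp)
  have h := Set.ncard_le_ncard_of_injOn f hmem hf.injOn
  refine le_trans (Eq.le ?_) h
  rw [Set.ncard_univ, Nat.card_eq_fintype_card]
  simp [← pow_mul, mul_comm]

end Cover

/-- Bounds on the size `V_C(n,m,q,d)` of the cover-metric ball of radius `d`:
`q^{m·d} ≤ V_C(n,m,q,d) ≤ (d+1)·2^{(m+n)·H_2(d/(m+n))}·q^{m·d}`. -/
theorem coverBall_size_bounds {F : Type*} [Field F] [Fintype F] {q m n d : ℕ}
    (hq : Fintype.card F = q) (hn : 0 < n) (hd : 0 < d) (hdn : d ≤ n) (hnm : n ≤ m) :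
    (q : ℝ) ^ (m * d) ≤
      (Nat.card {A : Matrix (Fin m) (Fin n) F | coverWt A ≤ d} : ℝ) ∧
    (Nat.card {A : Matrix (Fin m) (Fin n) F | coverWt A ≤ d} : ℝ) ≤
      (d + 1) * 2 ^ (((m : ℝ) + n) * H2 (d / (m + n))) * (q : ℝ) ^ (m * d) := by
  subst hq
  rw [Nat.card_coe_set_eq]
  refine ⟨by exact_mod_cast le_ncard_coverBall hdn, ?_⟩
  have hball := ncard_coverBall_le (F := F) hnm (show d ≤ m + n by omega)
  have hchoose := choose_le_two_rpow_mul_H2 hd (show d < m + n by omega)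
  push_cast at hchoose
  calc _ ≤ ((m + n).choose d : ℝ) * (Fintype.card F : ℝ) ^ (m * d) := by exact_mod_cast hball
    _ ≤ 2 ^ (((m : ℝ) + n) * H2 (d / (m + n))) * (Fintype.card F : ℝ) ^ (m * d) := by gcongr
    _ ≤ (d + 1) * 2 ^ (((m : ℝ) + n) * H2 (d / (m + n))) * (Fintype.card F : ℝ) ^ (m * d) := by
      rw [mul_assoc]
      exact le_mul_of_one_le_left (by positivity) (by simp)
end

section
/- Let q be a prime power and let t_x, t_y be nonnegative integers with t = t_x + t_y ≤ min{m,n}. Fix a set of t_x rows and t_y columns of an m×n matrix. Then the number of matrices E ∈ F_q^{m×n} whose nonzero entries all lie in the chosen rows and columns and which have a unique minimal cover, equal exactly to the chosen set of t lines, is at least q^{t_x·t_y}·(q^{n−t_y} − (q−1)(n−t) − q^{t_x})^{t_x}·(q^{m−t_x} − (q−1)(m−t) − q^{t_y})^{t_y}. -/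
/-- The set of lines determined by a set of rows and a set of columns. -/
def lineSet {m n : ℕ} (Rows : Finset (Fin m)) (Cols : Finset (Fin n)) :
    Finset (Fin m ⊕ Fin n) :=
  Rows.image Sum.inl ∪ Cols.image Sum.inr

open Finset

/-- Every nonempty set `S` of rows of `M` meets more than `#S` columns in nonzero entries. -/
def StrictHall {ι J F : Type*} [Zero F] (M : ι → J → F) : Prop :=
  ∀ (S : Finset ι) (U : Finset J), S.Nonempty →
    (∀ i ∈ S, ∀ j, M i j ≠ 0 → j ∈ U) → #S < #U

/-- The classes of the colouring `c` behave like the connected components of a forest having one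
edge inside the support of each row of `M`. -/
def IsForestColoring {ι J F : Type*} [Zero F] [Fintype ι] [Fintype J] [DecidableEq J]
    (M : ι → J → F) (c : J → J) : Prop :=
  Fintype.card J ≤ #(univ.image c) + Fintype.card ι ∧
    ∀ (S : Finset ι) (U : Finset J), (∀ i ∈ S, ∀ j, M i j ≠ 0 → j ∈ U) →
      #S + #(U.image c) ≤ #U

theorem IsForestColoring.strictHall {ι J F : Type*} [Zero F] [Fintype ι] [Fintype J]
    [DecidableEq J] {M : ι → J → F} {c : J → J} (h : IsForestColoring M c) : StrictHall M := by
  intro S U hS hSU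
  have h1 := h.2 S U hSU
  have hS' := hS.card_pos
  have hU : U.Nonempty := card_pos.1 (by omega)
  have := (hU.image c).card_pos
  omega

theorem isForestColoring_id {J F : Type*} [Zero F] [Fintype J] [DecidableEq J]
    (M : Fin 0 → J → F) : IsForestColoring M id := by
  refine ⟨by simp [card_univ], fun S U _ => ?_⟩
  simp [Subsingleton.elim S ∅]

/-- Adding a row whose support meets two colour classes, and merging these classes. -/
theorem IsForestColoring.cons {k : ℕ} {J F : Type*} [Zero F] [Fintype J] [DecidableEq J]
    {M : Fin k → J → F} {c : J → J} (h : IsForestColoring M c) {v : J → F} {a b : J}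
    (ha : v a ≠ 0) (hb : v b ≠ 0) (hab : c a ≠ c b) :
    IsForestColoring (Fin.cons v M : Fin (k + 1) → J → F)
      ((fun x => if x = c b then c a else x) ∘ c) := by
  refine ⟨?_, fun S U hSU => ?_⟩
  · have hsub : (univ.image c).erase (c b) ⊆
        univ.image ((fun x => if x = c b then c a else x) ∘ c) := by
      intro x hx
      obtain ⟨hx, hx'⟩ := mem_erase.1 hx
      obtain ⟨j, -, rfl⟩ := mem_image.1 hx'
      exact mem_image.2 ⟨j, mem_univ _, by simp [hx]⟩
    have h1 := card_le_card hsub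
    rw [card_erase_of_mem (mem_image_of_mem c (mem_univ b))] at h1
    have h2 := h.1
    simp only [Fintype.card_fin] at h2 ⊢
    omega
  · have hcard := Fin.card_filter_univ_succ (fun x => x ∈ S)
    have h1 := h.2 (univ.filter fun x => x.succ ∈ S) U fun i hi j hj =>
      hSU i.succ (mem_filter.1 hi).2 j (by simpa using hj)
    simp only [filter_univ_mem] at hcard
    rw [← image_image]
    split_ifs at hcard with h0
    · have hsub : (U.image c).image (fun x => if x = c b then c a else x) ⊆
          (U.image c).erase (c b) := by
        intro x hx
        obtain ⟨y, hy, rfl⟩ := mem_image.1 hx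
        have haU : c a ∈ U.image c := mem_image_of_mem c (hSU 0 h0 a (by simpa using ha))
        split_ifs with hyb
        · exact mem_erase.2 ⟨hab, haU⟩
        · exact mem_erase.2 ⟨hyb, hy⟩
      have h2 := card_le_card hsub
      have hbU : c b ∈ U.image c := mem_image_of_mem c (hSU 0 h0 b (by simpa using hb))
      have h3 := card_pos.2 ⟨_, hbU⟩
      rw [card_erase_of_mem hbU] at h2
      omega
    · have := card_image_le (s := U.image c) (f := fun x => if x = c b then c a else x)
      omega

theorem mul_sub_one_add_pow_le {q : ℤ} (hq : 1 ≤ q) (a d : ℕ) :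
    d * (q - 1) + q ^ a ≤ q ^ (a + d) := by
  induction d with
  | zero => simp
  | succ d ih =>
    have h1 : 1 ≤ q ^ (a + d) := one_le_pow₀ hq
    rw [← add_assoc, pow_succ]
    push_cast
    nlinarith

theorem pow_sub_mul_sub_pow_nonneg {q : ℤ} (hq : 1 ≤ q) {k N : ℕ} (hk : k ≤ N) :
    0 ≤ q ^ N - (q - 1) * ((N : ℤ) - k) - q ^ k := by
  have := mul_sub_one_add_pow_le hq k (N - k)
  rw [Nat.add_sub_cancel' hk, Nat.cast_sub hk] at this
  linarith

theorem sum_pow_succ_sub_le {α : Type*} {q : ℤ} (hq : 1 ≤ q) (P : Finset α) (g : α → ℕ) :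
    ∑ x ∈ P, (q ^ (g x + 1) - q) ≤ q ^ (∑ x ∈ P, g x + 1) - q := by
  classical
  induction P using Finset.induction_on with
  | empty => simp
  | insert x P hx ih =>
    rw [sum_insert hx, sum_insert hx]
    have h1 : 1 ≤ q ^ g x := one_le_pow₀ hq
    have h2 : 1 ≤ q ^ ∑ x ∈ P, g x := one_le_pow₀ hq
    have h3 : 0 ≤ q * ((q ^ g x - 1) * (q ^ (∑ x ∈ P, g x) - 1)) :=
      mul_nonneg (by omega) (mul_nonneg (by omega) (by omega))
    simp only [pow_succ, pow_add] at ih ⊢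
    nlinarith

/-- The number of vectors supported on a given set of coordinates. -/
theorem card_supported {J F : Type*} [Fintype J] [DecidableEq J] [Zero F] [Fintype F]
    [DecidableEq F] (U : Finset J) :
    #(univ.filter fun v : J → F => ∀ j, v j ≠ 0 → j ∈ U) = Fintype.card F ^ #U := by
  have : (univ.filter fun v : J → F => ∀ j, v j ≠ 0 → j ∈ U) =
      Fintype.piFinset fun j => if j ∈ U then (univ : Finset F) else {0} := by
    ext v
    simp only [mem_filter, mem_univ, true_and, Fintype.mem_piFinset]
    refine forall_congr' fun j => ?_
    by_cases hj : j ∈ U <;> simp [hj]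
  rw [this, Fintype.card_piFinset]
  simp [apply_ite Finset.card]

/-- Vectors supported in a single class of a colouring with many colours are few. -/
theorem card_monochromatic_le {J F : Type*} [Fintype J] [DecidableEq J] [Zero F] [Fintype F]
    [DecidableEq F] {k : ℕ} (c : J → J)
    (hc : Fintype.card J < #(univ.image c) + k) :
    (#(univ.filter fun v : J → F => ∀ a b, v a ≠ 0 → v b ≠ 0 → c a = c b) : ℤ) ≤
      ((Fintype.card F : ℤ) - 1) * ((Fintype.card J : ℤ) - k) + (Fintype.card F : ℤ) ^ k := by
  set q := Fintype.card F
  have hq : (1 : ℤ) ≤ q := by exact_mod_cast Fintype.card_pos (α := F)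
  set P := univ.image c
  let fib : J → Finset J := fun x => univ.filter fun j => c j = x
  let W : J → Finset (J → F) := fun x =>
    (univ.filter fun v : J → F => ∀ j, v j ≠ 0 → j ∈ fib x).erase 0
  have hW : ∀ x, (#(W x) : ℤ) = (q : ℤ) ^ #(fib x) - 1 := by
    intro x
    have h0 : (0 : J → F) ∈ univ.filter fun v : J → F => ∀ j, v j ≠ 0 → j ∈ fib x := by simp
    have := card_erase_add_one h0
    rw [card_supported] at this
    have h : #(W x) + 1 = q ^ #(fib x) := this
    rw [eq_sub_iff_add_eq]
    exact_mod_cast h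
  have hsub : (univ.filter fun v : J → F => ∀ a b, v a ≠ 0 → v b ≠ 0 → c a = c b) ⊆
      insert 0 (P.biUnion W) := by
    intro v hv
    by_cases hv0 : v = 0
    · simp [hv0]
    · obtain ⟨a, ha⟩ := Function.ne_iff.1 hv0
      refine mem_insert_of_mem (mem_biUnion.2 ⟨c a, mem_image_of_mem c (mem_univ a), ?_⟩)
      refine mem_erase.2 ⟨hv0, mem_filter.2 ⟨mem_univ _, fun j hj => ?_⟩⟩
      exact mem_filter.2 ⟨mem_univ _, (mem_filter.1 hv).2 j a hj ha⟩
  have h1 : #(univ.filter fun v : J → F => ∀ a b, v a ≠ 0 → v b ≠ 0 → c a = c b) ≤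
      ∑ x ∈ P, #(W x) + 1 :=
    (card_le_card hsub).trans ((card_insert_le _ _).trans
      (Nat.add_le_add_right card_biUnion_le 1))
  have hfib : ∀ x ∈ P, #(fib x) = (#(fib x) - 1) + 1 := by
    intro x hx
    obtain ⟨j, -, rfl⟩ := mem_image.1 hx
    have : 0 < #(fib (c j)) := card_pos.2 ⟨j, by simp [fib]⟩
    omega
  have hsum : Fintype.card J = ∑ x ∈ P, (#(fib x) - 1) + #P := by
    rw [← card_univ, card_eq_sum_card_image c univ, card_eq_sum_ones P, ← sum_add_distrib]
    exact sum_congr rfl hfib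
  have h2 : (∑ x ∈ P, (#(W x) : ℤ)) =
      ∑ x ∈ P, ((q : ℤ) ^ ((#(fib x) - 1) + 1) - q) + #P * ((q : ℤ) - 1) := by
    rw [← nsmul_eq_mul, ← sum_const, ← sum_add_distrib]
    refine sum_congr rfl fun x hx => ?_
    rw [hW, ← hfib x hx]
    ring
  have h3 := sum_pow_succ_sub_le hq P fun x => #(fib x) - 1
  obtain ⟨d, hd⟩ : ∃ d, k = ∑ x ∈ P, (#(fib x) - 1) + 1 + d :=
    Nat.exists_eq_add_of_le (by omega)
  have h4 := mul_sub_one_add_pow_le hq (∑ x ∈ P, (#(fib x) - 1) + 1) d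
  rw [← hd] at h4
  have h1' : (#(univ.filter fun v : J → F => ∀ a b, v a ≠ 0 → v b ≠ 0 → c a = c b) : ℤ) ≤
      ∑ x ∈ P, (#(W x) : ℤ) + 1 := by exact_mod_cast h1
  have h5 : (Fintype.card J : ℤ) - k = #P - 1 - d := by
    rw [hsum, hd]
    push_cast
    ring
  rw [h5]
  rw [h2] at h1'
  nlinarith

/-- Greedy lower bound for the number of matrices admitting a forest colouring. -/
theorem pow_le_card_forestColoring {J F : Type*} [Fintype J] [DecidableEq J] [Zero F]
    [Fintype F] [DecidableEq F] {k : ℕ} (hk : k ≤ Fintype.card J) (i : ℕ) (hi : i ≤ k) :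
    ((Fintype.card F : ℤ) ^ Fintype.card J -
        ((Fintype.card F : ℤ) - 1) * ((Fintype.card J : ℤ) - k) - (Fintype.card F : ℤ) ^ k) ^ i ≤
      Nat.card {M : Fin i → J → F // ∃ c, IsForestColoring M c} := by
  classical
  set B : ℤ := (Fintype.card F : ℤ) ^ Fintype.card J -
    ((Fintype.card F : ℤ) - 1) * ((Fintype.card J : ℤ) - k) - (Fintype.card F : ℤ) ^ k
  have hB0 : 0 ≤ B := by
    have hq : (1 : ℤ) ≤ Fintype.card F := by exact_mod_cast Fintype.card_pos (α := F)
    exact pow_sub_mul_sub_pow_nonneg hq hk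
  induction i with
  | zero =>
    have : Nonempty {M : Fin 0 → J → F // ∃ c, IsForestColoring M c} :=
      ⟨⟨Fin.elim0, id, isForestColoring_id _⟩⟩
    have : 0 < Nat.card {M : Fin 0 → J → F // ∃ c, IsForestColoring M c} := Nat.card_pos
    rw [pow_zero]
    exact_mod_cast this
  | succ i ih =>
    have ih := ih (by omega)
    let G := {M : Fin i → J → F // ∃ c, IsForestColoring M c}
    let c : G → J → J := fun M => M.2.choose
    let Q : G → (J → F) → Prop := fun M v => ∀ a b, v a ≠ 0 → v b ≠ 0 → c M a = c M b
    let f : (Σ M : G, {v : J → F // ¬ Q M v}) →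
        {M : Fin (i + 1) → J → F // ∃ c, IsForestColoring M c} := fun x =>
      ⟨Fin.cons x.2.1 x.1.1, by
        have hx := x.2.2
        simp only [Q, not_forall] at hx
        obtain ⟨a, b, ha, hb, hab⟩ := hx
        exact ⟨_, x.1.2.choose_spec.cons ha hb hab⟩⟩
    have hf : Function.Injective f := by
      rintro ⟨⟨M, hM⟩, v, hv⟩ ⟨⟨M', hM'⟩, v', hv'⟩ h
      have h : (Fin.cons v M : Fin (i + 1) → J → F) = Fin.cons v' M' := congrArg Subtype.val h
      obtain ⟨rfl, rfl⟩ := Fin.cons_injective2 h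
      rfl
    have hle := Nat.card_le_card_of_injective f hf
    rw [Nat.card_sigma] at hle
    have hfiber : ∀ M : G, B ≤ (Nat.card {v : J → F // ¬ Q M v} : ℤ) := by
      intro M
      have h1 := M.2.choose_spec.1
      rw [Fintype.card_fin] at h1
      have h2 := card_monochromatic_le (F := F) (k := k) (c M) (by
        change Fintype.card J < #(univ.image M.2.choose) + k
        omega)
      have h3 := card_filter_add_card_filter_not (s := (univ : Finset (J → F))) (Q M)
      rw [Nat.card_eq_fintype_card, Fintype.card_subtype]
      rw [card_univ, Fintype.card_fun] at h3
      have h4 : (#(univ.filter (Q M)) : ℤ) + #(univ.filter fun v => ¬ Q M v) =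
          (Fintype.card F : ℤ) ^ Fintype.card J := by exact_mod_cast h3
      have h5 : #(univ.filter (Q M)) =
          #(univ.filter fun v : J → F => ∀ a b, v a ≠ 0 → v b ≠ 0 → c M a = c M b) := by
        congr
      rw [← h5] at h2
      linarith
    calc B ^ (i + 1) = B ^ i * B := pow_succ B i
      _ ≤ Nat.card G * B := mul_le_mul_of_nonneg_right ih hB0
      _ = ∑ _M : G, B := by rw [sum_const, card_univ, nsmul_eq_mul, Nat.card_eq_fintype_card]
      _ ≤ ∑ M : G, (Nat.card {v : J → F // ¬ Q M v} : ℤ) := sum_le_sum fun M _ => hfiber M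
      _ ≤ _ := by exact_mod_cast hle

theorem StrictHall.comp_injective {ι κ J F : Type*} [Zero F] {M : ι → J → F}
    (h : StrictHall M) (e : κ ↪ ι) : StrictHall (M ∘ e) := by
  intro S U hS hSU
  have := h (S.map e) U hS.map fun i hi j hj => by
    obtain ⟨x, hx, rfl⟩ := mem_map.1 hi
    exact hSU x hx j hj
  simpa using this

theorem pow_le_card_strictHall {ι J F : Type*} [Fintype ι] [Fintype J] [Zero F] [Fintype F]
    (h : Fintype.card ι ≤ Fintype.card J) :
    ((Fintype.card F : ℤ) ^ Fintype.card J -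
        ((Fintype.card F : ℤ) - 1) * ((Fintype.card J : ℤ) - Fintype.card ι) -
        (Fintype.card F : ℤ) ^ Fintype.card ι) ^ Fintype.card ι ≤
      Nat.card {M : ι → J → F // StrictHall M} := by
  classical
  refine (pow_le_card_forestColoring (F := F) h _ le_rfl).trans ?_
  let e := Fintype.equivFin ι
  let f : {M : Fin (Fintype.card ι) → J → F // ∃ c, IsForestColoring M c} →
      {M : ι → J → F // StrictHall M} := fun M =>
    ⟨M.1 ∘ e, M.2.choose_spec.strictHall.comp_injective e.toEmbedding⟩
  have hf : Function.Injective f := fun M M' hM =>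
    Subtype.ext (e.surjective.injective_comp_right (congrArg Subtype.val hM))
  exact_mod_cast Nat.card_le_card_of_injective f hf

/-- The form of `StrictHall` used to compare covers: if the columns in `V` cover the rows of `E`
in `Rows \ R'` outside `Cols`, then `V \ Cols` is larger than `Rows \ R'`, unless the latter is
empty. -/
theorem card_sdiff_lt_of_strictHall {I J F : Type*} [DecidableEq I] [DecidableEq J] [Zero F]
    {Rows R' : Finset I} {Cols V : Finset J} {E : I → J → F}
    (h : StrictHall fun (i : Rows) (j : {j // j ∉ Cols}) => E i j)
    (hcov : ∀ i j, E i j ≠ 0 → i ∈ R' ∨ j ∈ V) (hne : (Rows \ R').Nonempty) :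
    #(Rows \ R') < #(V \ Cols) := by
  have h1 := h ((Rows \ R').subtype (· ∈ Rows)) ((V \ Cols).subtype (· ∉ Cols))
    (by
      obtain ⟨i, hi⟩ := hne
      exact ⟨⟨i, (mem_sdiff.1 hi).1⟩, by simpa using mem_sdiff.1 hi⟩)
    (by
      intro i hi j hj
      have hiR : (i : I) ∉ R' := (mem_sdiff.1 (mem_subtype.1 hi)).2
      exact mem_subtype.2 (mem_sdiff.2 ⟨(hcov i j hj).resolve_left hiR, j.2⟩))
  rw [card_subtype, card_subtype] at h1
  rwa [filter_true_of_mem fun i hi => (mem_sdiff.1 hi).1,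
    filter_true_of_mem fun i hi => (mem_sdiff.1 hi).2] at h1

theorem lineSet_eq_disjSum {m n : ℕ} (Rows : Finset (Fin m)) (Cols : Finset (Fin n)) :
    lineSet Rows Cols = Rows.disjSum Cols := by
  ext (i | j) <;> simp [lineSet]

theorem IsCover.eq_or_card_lt {F : Type*} [Field F] {m n : ℕ} {E : Matrix (Fin m) (Fin n) F}
    {Rows : Finset (Fin m)} {Cols : Finset (Fin n)}
    (hR : StrictHall fun (i : Rows) (j : {j // j ∉ Cols}) => E i j)
    (hC : StrictHall fun (j : Cols) (i : {i // i ∉ Rows}) => E i j)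
    {S : Finset (Fin m ⊕ Fin n)} (hS : IsCover E S) :
    S = lineSet Rows Cols ∨ #Rows + #Cols < #S := by
  obtain ⟨R', C', rfl⟩ : ∃ (R' : Finset (Fin m)) (C' : Finset (Fin n)), S = R'.disjSum C' :=
    ⟨_, _, toLeft_disjSum_toRight.symm⟩
  have hcov : ∀ i j, E i j ≠ 0 → i ∈ R' ∨ j ∈ C' := fun i j h => by simpa using hS i j h
  have h1 := card_sdiff_lt_of_strictHall (R' := R') (V := C') hR hcov
  have h2 := card_sdiff_lt_of_strictHall (E := fun j i => E i j) (R' := C') (V := R') hC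
    fun j i h => (hcov i j h).symm
  rw [lineSet_eq_disjSum, card_disjSum]
  have e1 := card_sdiff_add_card_inter Rows R'
  have e2 := card_sdiff_add_card_inter Cols C'
  have e3 := card_sdiff_add_card_inter R' Rows
  have e4 := card_sdiff_add_card_inter C' Cols
  rw [inter_comm] at e3 e4
  rcases (Rows \ R').eq_empty_or_nonempty with hA | hA <;>
    rcases (Cols \ C').eq_empty_or_nonempty with hD | hD
  · by_cases h : #(R' \ Rows) = 0 ∧ #(C' \ Cols) = 0
    · left
      rw [sdiff_eq_empty_iff_subset] at hA hD
      rw [card_eq_zero, card_eq_zero, sdiff_eq_empty_iff_subset, sdiff_eq_empty_iff_subset] at h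
      rw [h.1.antisymm hA, h.2.antisymm hD]
    · rw [hA, card_empty] at e1
      rw [hD, card_empty] at e2
      omega
  · have := h2 hD
    rw [hA, card_empty] at e1
    omega
  · have := h1 hA
    rw [hD, card_empty] at e2
    omega
  · have := h1 hA
    have := h2 hD
    omega

theorem coverWt_eq_and_unique {F : Type*} [Field F] {m n : ℕ} {E : Matrix (Fin m) (Fin n) F}
    {Rows : Finset (Fin m)} {Cols : Finset (Fin n)} (hE : IsCover E (lineSet Rows Cols))
    (hR : StrictHall fun (i : Rows) (j : {j // j ∉ Cols}) => E i j)
    (hC : StrictHall fun (j : Cols) (i : {i // i ∉ Rows}) => E i j) :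
    coverWt E = #Rows + #Cols ∧ ∀ S, IsCover E S → #S = #Rows + #Cols →
      S = lineSet Rows Cols := by
  have hcard : #(lineSet Rows Cols) = #Rows + #Cols := by
    rw [lineSet_eq_disjSum, card_disjSum]
  refine ⟨le_antisymm (Nat.sInf_le ⟨_, hE, hcard⟩) (le_csInf ⟨_, _, hE, rfl⟩ ?_), ?_⟩
  · rintro _ ⟨S, hS, rfl⟩
    rcases hS.eq_or_card_lt hR hC with rfl | h
    · exact hcard.ge
    · exact h.le
  · intro S hS h
    exact (hS.eq_or_card_lt hR hC).resolve_right (by omega)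

/-- The matrix with prescribed blocks `Rows × Cols`, `Rows × Colsᶜ` and (transposed)
`Rowsᶜ × Cols`, and zero elsewhere. -/
def blockMatrix {m n : ℕ} {F : Type*} [Zero F] (Rows : Finset (Fin m)) (Cols : Finset (Fin n))
    (A : Rows → Cols → F) (M : Rows → {j // j ∉ Cols} → F) (M' : Cols → {i // i ∉ Rows} → F) :
    Matrix (Fin m) (Fin n) F := fun i j =>
  if hi : i ∈ Rows then
    if hj : j ∈ Cols then A ⟨i, hi⟩ ⟨j, hj⟩ else M ⟨i, hi⟩ ⟨j, hj⟩
  else if hj : j ∈ Cols then M' ⟨j, hj⟩ ⟨i, hi⟩ else 0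

section

variable {m n : ℕ} {F : Type*} [Zero F] {Rows : Finset (Fin m)} {Cols : Finset (Fin n)}
  (A : Rows → Cols → F) (M : Rows → {j // j ∉ Cols} → F) (M' : Cols → {i // i ∉ Rows} → F)

theorem blockMatrix_rows_cols :
    (fun (i : Rows) (j : Cols) => blockMatrix Rows Cols A M M' i j) = A := by
  ext i j
  simp [blockMatrix]

theorem blockMatrix_rows :
    (fun (i : Rows) (j : {j // j ∉ Cols}) => blockMatrix Rows Cols A M M' i j) = M := by
  ext i j
  simp [blockMatrix, j.2]

theorem blockMatrix_cols :
    (fun (j : Cols) (i : {i // i ∉ Rows}) => blockMatrix Rows Cols A M M' i j) = M' := by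
  ext j i
  simp [blockMatrix, i.2]

end

theorem isCover_blockMatrix {m n : ℕ} {F : Type*} [Field F] {Rows : Finset (Fin m)}
    {Cols : Finset (Fin n)} (A : Rows → Cols → F) (M : Rows → {j // j ∉ Cols} → F)
    (M' : Cols → {i // i ∉ Rows} → F) :
    IsCover (blockMatrix Rows Cols A M M') (lineSet Rows Cols) := by
  intro i j h
  by_contra hij
  simp only [lineSet_eq_disjSum, inl_mem_disjSum, inr_mem_disjSum, not_or] at hij
  exact h (by simp [blockMatrix, hij.1, hij.2])

/-- Counting matrices with a unique minimal cover: for a fixed choice of `t_x`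
rows and `t_y` columns with `t = t_x + t_y ≤ min{m,n}`, the number of matrices
supported on these lines whose unique minimal cover is exactly the chosen set of
`t` lines is at least
`q^{t_x t_y}·(q^{n−t_y} − (q−1)(n−t) − q^{t_x})^{t_x}·(q^{m−t_x} − (q−1)(m−t) − q^{t_y})^{t_y}`. -/
theorem unique_minimal_cover_count {F : Type*} [Field F] [Fintype F]
    {q m n tx ty t : ℕ} (hq : Fintype.card F = q) (ht : t = tx + ty)
    (htm : t ≤ m) (htn : t ≤ n)
    (Rows : Finset (Fin m)) (Cols : Finset (Fin n))
    (hRows : Rows.card = tx) (hCols : Cols.card = ty) :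
    (q : ℤ) ^ (tx * ty) *
        ((q : ℤ) ^ (n - ty) - ((q : ℤ) - 1) * ((n : ℤ) - t) - (q : ℤ) ^ tx) ^ tx *
        ((q : ℤ) ^ (m - tx) - ((q : ℤ) - 1) * ((m : ℤ) - t) - (q : ℤ) ^ ty) ^ ty ≤
      (Nat.card {E : Matrix (Fin m) (Fin n) F |
          IsCover E (lineSet Rows Cols) ∧ coverWt E = t ∧
          ∀ S : Finset (Fin m ⊕ Fin n), IsCover E S → S.card = t →
            S = lineSet Rows Cols} : ℤ) := by
  classical
  subst hq ht hRows hCols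
  have hI : Fintype.card {i // i ∉ Rows} = m - #Rows := by simp [Fintype.card_subtype_compl]
  have hJ : Fintype.card {j // j ∉ Cols} = n - #Cols := by simp [Fintype.card_subtype_compl]
  have hM := pow_le_card_strictHall (ι := Rows) (J := {j // j ∉ Cols}) (F := F)
    (by rw [hJ, Fintype.card_coe]; omega)
  have hM' := pow_le_card_strictHall (ι := Cols) (J := {i // i ∉ Rows}) (F := F)
    (by rw [hI, Fintype.card_coe]; omega)
  have hq : (1 : ℤ) ≤ Fintype.card F := by exact_mod_cast Fintype.card_pos (α := F)
  have h0 := pow_sub_mul_sub_pow_nonneg hq (k := #Cols) (N := m - #Rows) (by omega)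
  rw [Nat.cast_sub (by omega), sub_sub (m : ℤ), ← Nat.cast_add] at h0
  rw [hJ, Fintype.card_coe, Nat.cast_sub (by omega), sub_sub (n : ℤ),
    add_comm (#Cols : ℤ), ← Nat.cast_add] at hM
  rw [hI, Fintype.card_coe, Nat.cast_sub (by omega), sub_sub (m : ℤ), ← Nat.cast_add] at hM'
  let f : (Rows → Cols → F) × {M : Rows → {j // j ∉ Cols} → F // StrictHall M} ×
      {M : Cols → {i // i ∉ Rows} → F // StrictHall M} →
      {E : Matrix (Fin m) (Fin n) F | IsCover E (lineSet Rows Cols) ∧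
        coverWt E = #Rows + #Cols ∧ ∀ S : Finset (Fin m ⊕ Fin n), IsCover E S →
          S.card = #Rows + #Cols → S = lineSet Rows Cols} := fun x =>
    ⟨blockMatrix Rows Cols x.1 x.2.1.1 x.2.2.1, isCover_blockMatrix _ _ _,
      coverWt_eq_and_unique (isCover_blockMatrix _ _ _)
        (by rw [blockMatrix_rows]; exact x.2.1.2) (by rw [blockMatrix_cols]; exact x.2.2.2)⟩
  have hf : Function.Injective f := by
    rintro ⟨A, ⟨M, hM⟩, M', hM'⟩ ⟨B, ⟨N, hN⟩, N', hN'⟩ h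
    have h : blockMatrix Rows Cols A M M' = blockMatrix Rows Cols B N N' :=
      congrArg Subtype.val h
    obtain rfl : A = B := by
      rw [← blockMatrix_rows_cols A M M', h, blockMatrix_rows_cols]
    obtain rfl : M = N := by rw [← blockMatrix_rows A M M', h, blockMatrix_rows]
    obtain rfl : M' = N' := by rw [← blockMatrix_cols A M M', h, blockMatrix_cols]
    rfl
  have hle := Nat.card_le_card_of_injective f hf
  have hA : Nat.card (Rows → Cols → F) = Fintype.card F ^ (#Rows * #Cols) := by
    rw [Nat.card_eq_fintype_card, Fintype.card_fun, Fintype.card_fun, Fintype.card_coe,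
      Fintype.card_coe, ← pow_mul, mul_comm]
  rw [Nat.card_prod, Nat.card_prod, hA, ← mul_assoc] at hle
  refine le_trans ?_ (Int.ofNat_le.2 hle)
  rw [Int.natCast_mul, Int.natCast_mul, Nat.cast_pow]
  exact mul_le_mul (mul_le_mul_of_nonneg_left hM (by positivity)) hM' (pow_nonneg h0 _)
    (by positivity)
end

section
/- Let q be a prime power and t ≤ min{n,m} a positive integer. Then the number F_C(n,m,q,t) of matrices in F_q^{m×n} of cover weight exactly t satisfies F_C(n,m,q,t) ≥ Σ_{t_x+t_y=t} C(m,t_x)·C(n,t_y)·q^{t_x·t_y}·(q^{n−t_y} − (q−1)(n−t) − q^{t_x})^{t_x}·(q^{m−t_x} − (q−1)(m−t) − q^{t_y})^{t_y}, where the sum ranges over nonnegative integers t_x, t_y with t_x + t_y = t and C(a,b) denotes a binomial coefficient. -/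
open Function

section Surplus

variable {κ ι F : Type*} [Field F]

/-- The set of columns in which some row of `M` with index in `S` has a nonzero entry. -/
def rowsSupport (M : κ → ι → F) (S : Finset κ) : Set ι := {j | ∃ i ∈ S, M i j ≠ 0}

/-- Every nonempty set of rows meets strictly more columns than it has rows. -/
def HasSurplus (M : κ → ι → F) : Prop :=
  ∀ S : Finset κ, S.Nonempty → S.card < (rowsSupport M S).ncard

/-- A nonempty set of rows meeting exactly one column more than it has rows. -/
def IsTight (M : κ → ι → F) (S : Finset κ) : Prop :=
  S.Nonempty ∧ (rowsSupport M S).ncard = S.card + 1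

/-- The vectors that, appended to `M` as a new row, may destroy the surplus property. -/
def badRows (M : κ → ι → F) : Set (ι → F) :=
  {v | ∃ S : Finset κ, (rowsSupport M S ∪ support v).ncard ≤ S.card + 1}

theorem rowsSupport_union [DecidableEq κ] (M : κ → ι → F) (S T : Finset κ) :
    rowsSupport M (S ∪ T) = rowsSupport M S ∪ rowsSupport M T := by
  ext j
  simp only [rowsSupport, Finset.mem_union, Set.mem_ofPred_eq, Set.mem_union]
  grind

theorem rowsSupport_mono (M : κ → ι → F) {S T : Finset κ} (h : S ⊆ T) :
    rowsSupport M S ⊆ rowsSupport M T :=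
  fun _ ⟨i, hi, hij⟩ => ⟨i, h hi, hij⟩

theorem IsTight.union [Finite ι] [DecidableEq κ] {M : κ → ι → F} (hM : HasSurplus M)
    {S T : Finset κ} (hS : IsTight M S) (hT : IsTight M T) (hST : (S ∩ T).Nonempty) :
    IsTight M (S ∪ T) := by
  have hne : (S ∪ T).Nonempty := hS.1.mono Finset.subset_union_left
  refine ⟨hne, ?_⟩
  have h1 := Set.ncard_union_add_ncard_inter (rowsSupport M S) (rowsSupport M T)
  have h2 : (rowsSupport M (S ∩ T)).ncard ≤ (rowsSupport M S ∩ rowsSupport M T).ncard :=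
    Set.ncard_le_ncard (Set.subset_inter (rowsSupport_mono M Finset.inter_subset_left)
      (rowsSupport_mono M Finset.inter_subset_right))
  have h3 := hM _ hST
  have h4 := hM _ hne
  have h5 := Finset.card_union_add_card_inter S T
  have h6 := hS.2
  have h7 := hT.2
  rw [← rowsSupport_union] at h1
  omega

theorem hasSurplus_optionElim {M : κ → ι → F} (hM : HasSurplus M)
    {v : ι → F} (hv : v ∉ badRows M) : HasSurplus (fun o : Option κ => o.elim v M) := by
  intro S hS
  by_cases h : none ∈ S
  · have hcard := Finset.card_eraseNone_of_mem h
    have hpos := Finset.card_pos.2 hS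
    have heq : rowsSupport (fun o : Option κ => o.elim v M) S
        = rowsSupport M S.eraseNone ∪ support v := by
      ext j
      simp [rowsSupport, Option.exists, h, or_comm]
    rw [heq]
    by_contra hlt
    exact hv ⟨S.eraseNone, by omega⟩
  · have hcard := Finset.card_eraseNone_of_not_mem h
    have heq : rowsSupport (fun o : Option κ => o.elim v M) S = rowsSupport M S.eraseNone := by
      ext j
      simp [rowsSupport, Option.exists, h]
    rw [heq, ← hcard]
    refine hM _ (Finset.card_pos.1 ?_)
    rw [hcard]
    exact Finset.card_pos.2 hS

theorem ncard_support_subset [Finite F] [Finite ι] (D : Set ι) :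
    {v : ι → F | support v ⊆ D}.ncard = Nat.card F ^ D.ncard := by
  classical
  have hinj : Injective fun (w : D → F) (j : ι) => if h : j ∈ D then w ⟨j, h⟩ else 0 := by
    intro w w' h
    funext j
    simpa using congrFun h j
  have hrange : {v : ι → F | support v ⊆ D} =
      Set.range fun (w : D → F) (j : ι) => if h : j ∈ D then w ⟨j, h⟩ else 0 := by
    ext v
    constructor
    · intro hv
      refine ⟨fun j => v j, funext fun j => ?_⟩
      by_cases h : j ∈ D
      · simp [h]
      · have : v j = 0 := by
          by_contra hne
          exact h (hv hne)
        simp [h, this]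
    · rintro ⟨w, rfl⟩ j hj
      by_contra h
      simp [h] at hj
  rw [hrange, Set.ncard_range_of_injective hinj, Nat.card_fun, Nat.card_coe_set_eq]

theorem ncard_support_subset_le_one [Finite F] [Finite ι] (D : Set ι) :
    {v : ι → F | support v ⊆ D ∧ (support v).ncard ≤ 1}.ncard
      = 1 + D.ncard * (Nat.card F - 1) := by
  classical
  let f : Option (D × Fˣ) → ι → F := fun o => o.elim 0 fun p => Pi.single p.1.1 p.2.1
  have hinj : Injective f := by
    have hne (p : D × Fˣ) : (Pi.single p.1.1 p.2.1 : ι → F) ≠ 0 := by simp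
    rintro (_ | p) (_ | p') h
    · rfl
    · exact absurd h.symm (hne p')
    · exact absurd h (hne p)
    · have h' : (Pi.single p.1.1 p.2.1 : ι → F) = Pi.single p'.1.1 p'.2.1 := h
      have hj : p.1.1 = p'.1.1 := by
        by_contra hcon
        have := congrFun h' p.1.1
        rw [Pi.single_eq_same, Pi.single_eq_of_ne hcon] at this
        exact p.2.ne_zero this
      have ha : p.2.1 = p'.2.1 := by
        have := congrFun h' p.1.1
        rwa [Pi.single_eq_same, hj, Pi.single_eq_same] at this
      exact congrArg some (Prod.ext (Subtype.ext hj) (Units.ext ha))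
  have hrange : {v : ι → F | support v ⊆ D ∧ (support v).ncard ≤ 1} = Set.range f := by
    ext v
    constructor
    · rintro ⟨hD, hv⟩
      rcases (support v).eq_empty_or_nonempty with h0 | ⟨j, hj⟩
      · exact ⟨none, (support_eq_empty_iff.1 h0).symm⟩
      · refine ⟨some (⟨j, hD hj⟩, Units.mk0 (v j) hj), funext fun j' => ?_⟩
        by_cases h : j' = j
        · subst h
          exact (Pi.single_eq_same _ _).trans (Units.val_mk0 hj)
        · have : v j' = 0 := by
            by_contra hne
            exact h ((Set.ncard_le_one).1 hv j' hne j hj)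
          simp [f, h, this]
    · rintro ⟨_ | p, rfl⟩
      · simp [f]
      · have hs : support (f (some p)) ⊆ {p.1.1} := Pi.support_single_subset
        refine ⟨hs.trans (by simp), ?_⟩
        simpa using Set.ncard_le_ncard hs
  rw [hrange, Set.ncard_range_of_injective hinj, Finite.card_option, Nat.card_prod,
    Nat.card_units, Nat.card_coe_set_eq, add_comm]

theorem ncard_support_subset_two_le [Finite F] [Finite ι] (D : Set ι) :
    ({v : ι → F | support v ⊆ D ∧ 2 ≤ (support v).ncard}.ncard : ℤ)
      = (Nat.card F : ℤ) ^ D.ncard - (1 + D.ncard * ((Nat.card F : ℤ) - 1)) := by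
  have hdisj : Disjoint {v : ι → F | support v ⊆ D ∧ (support v).ncard ≤ 1}
      {v : ι → F | support v ⊆ D ∧ 2 ≤ (support v).ncard} := by
    rw [Set.disjoint_left]
    rintro v ⟨-, h⟩ ⟨-, h'⟩
    omega
  have hunion : {v : ι → F | support v ⊆ D ∧ (support v).ncard ≤ 1} ∪
      {v : ι → F | support v ⊆ D ∧ 2 ≤ (support v).ncard} = {v : ι → F | support v ⊆ D} := by
    ext v
    simp only [Set.mem_union, Set.mem_ofPred_eq, ← and_or_left, and_iff_left_iff_imp]
    omega
  have h := Set.ncard_union_eq hdisj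
  rw [hunion, ncard_support_subset, ncard_support_subset_le_one] at h
  have hF : 1 ≤ Nat.card F := Nat.card_pos
  generalize {v : ι → F | support v ⊆ D ∧ 2 ≤ (support v).ncard}.ncard = a at h ⊢
  zify [hF] at h
  linarith

/-- The number of vectors of weight at least two supported on a set of `s + 1` coordinates, as a
function of `s`, is superadditive. -/
theorem sum_weight_two_count_le {α : Type*} (T : Finset α) (s : α → ℕ) {q : ℤ} (hq : 1 ≤ q) :
    ∑ a ∈ T, (q ^ (s a + 1) - (1 + ((s a : ℤ) + 1) * (q - 1)))
      ≤ q ^ (∑ a ∈ T, s a + 1) - (1 + (((∑ a ∈ T, s a : ℕ) : ℤ) + 1) * (q - 1)) := by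
  classical
  induction T using Finset.induction_on with
  | empty => simp
  | insert a T ha ih =>
    rw [Finset.sum_insert ha, Finset.sum_insert ha]
    have h1 : 0 ≤ (q ^ s a - 1) := sub_nonneg.2 (one_le_pow₀ hq)
    have h2 : 0 ≤ (q ^ (∑ a ∈ T, s a) - 1) := sub_nonneg.2 (one_le_pow₀ hq)
    have h3 := mul_nonneg (mul_nonneg (by linarith : 0 ≤ q) h1) h2
    push_cast at ih ⊢
    simp only [pow_add, pow_one] at ih ⊢
    nlinarith

theorem sub_one_mul_sub_add_pow_le_pow {q : ℤ} (hq : 1 ≤ q) {a b : ℕ} (hab : a ≤ b) :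
    (q - 1) * ((b : ℤ) - a) + q ^ a ≤ q ^ b := by
  induction b, hab using Nat.le_induction with
  | base => simp
  | succ b _ ih =>
    have h : 1 ≤ q ^ b := one_le_pow₀ hq
    push_cast
    rw [pow_succ q b]
    nlinarith

theorem ncard_badRows_le [Finite κ] [Finite ι] [Finite F] {M : κ → ι → F} (hM : HasSurplus M)
    {k : ℕ} (hk : Nat.card κ < k) :
    ((badRows M).ncard : ℤ) ≤ ((Nat.card F : ℤ) - 1) * ((Nat.card ι : ℤ) - k) +
      (Nat.card F : ℤ) ^ k := by
  classical
  have := Fintype.ofFinite κ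
  obtain ⟨k, rfl⟩ : ∃ l, k = l + 1 := ⟨k - 1, by omega⟩
  let T : Finset (Finset κ) := {S | Maximal (IsTight M) S}
  have hT (S) (hS : S ∈ T) : Maximal (IsTight M) S := by simpa [T] using hS
  have hdisj : (T : Set (Finset κ)).PairwiseDisjoint id := by
    intro S hS S' hS' hne
    by_contra hnd
    have hinter : (S ∩ S').Nonempty := Finset.not_disjoint_iff_nonempty_inter.1 hnd
    have hS := hT S hS
    have hS' := hT S' hS'
    have htight := hS.prop.union hM hS'.prop hinter
    have h1 : S = S ∪ S' := hS.eq_of_le htight Finset.subset_union_left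
    have h2 : S' = S ∪ S' := hS'.eq_of_le htight Finset.subset_union_right
    exact hne (h1.trans h2.symm)
  have hsum : ∑ S ∈ T, S.card ≤ k := by
    rw [Nat.card_eq_fintype_card, Nat.lt_succ_iff] at hk
    calc ∑ S ∈ T, S.card = (T.biUnion id).card := (Finset.card_biUnion hdisj).symm
      _ ≤ Fintype.card κ := Finset.card_le_univ _
      _ ≤ k := hk
  have hsub : badRows M ⊆ {v : ι → F | support v ⊆ Set.univ ∧ (support v).ncard ≤ 1} ∪
      ⋃ S ∈ T, {v : ι → F | support v ⊆ rowsSupport M S ∧ 2 ≤ (support v).ncard} := by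
    rintro v ⟨S, hS⟩
    by_cases h1 : (support v).ncard ≤ 1
    · exact Or.inl ⟨Set.subset_univ _, h1⟩
    right
    have hle : (support v).ncard ≤ (rowsSupport M S ∪ support v).ncard :=
      Set.ncard_le_ncard Set.subset_union_right
    have hne : S.Nonempty := by
      rw [Finset.nonempty_iff_ne_empty]
      rintro rfl
      rw [Finset.card_empty] at hS
      omega
    have hlt := hM S hne
    have heq := Set.eq_of_subset_of_ncard_le
      (Set.subset_union_left (s := rowsSupport M S) (t := support v)) (by omega)
    rw [← heq] at hS
    obtain ⟨S', hSS', hS'⟩ :=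
      Finite.exists_le_maximal (p := IsTight M) (a := S) ⟨hne, by omega⟩
    simp only [Set.mem_iUnion]
    refine ⟨S', by simpa [T] using hS', ?_, by omega⟩
    exact (Set.union_eq_left.1 heq.symm).trans (rowsSupport_mono M hSS')
  have hF : 1 ≤ Nat.card F := Nat.card_pos
  have hle := (Set.ncard_le_ncard hsub).trans ((Set.ncard_union_le _ _).trans
    (Nat.add_le_add_left (Finset.set_ncard_biUnion_le _ _) _))
  rw [ncard_support_subset_le_one, Set.ncard_univ] at hle
  have hle' : ((badRows M).ncard : ℤ) ≤ 1 + (Nat.card ι : ℤ) * ((Nat.card F : ℤ) - 1) +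
      ∑ S ∈ T, ({v : ι → F | support v ⊆ rowsSupport M S ∧ 2 ≤ (support v).ncard}.ncard : ℤ) := by
    have h := (Nat.cast_le (α := ℤ)).2 hle
    push_cast [Nat.cast_sub hF] at h
    exact h
  have hrw : ∑ S ∈ T,
      ({v : ι → F | support v ⊆ rowsSupport M S ∧ 2 ≤ (support v).ncard}.ncard : ℤ) =
      ∑ S ∈ T, ((Nat.card F : ℤ) ^ (S.card + 1) -
        (1 + ((S.card : ℤ) + 1) * ((Nat.card F : ℤ) - 1))) := by
    refine Finset.sum_congr rfl fun S hS => ?_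
    rw [ncard_support_subset_two_le, (hT S hS).prop.2]
    push_cast
    rfl
  have hF' : (1 : ℤ) ≤ Nat.card F := by exact_mod_cast hF
  have h1 := sum_weight_two_count_le T Finset.card hF'
  have h2 := sub_one_mul_sub_add_pow_le_pow hF' (Nat.add_le_add_right hsum 1)
  rw [hrw] at hle'
  push_cast at h1 h2 ⊢
  linarith

theorem HasSurplus.comp_injective {κ' : Type*} {M : κ → ι → F} (hM : HasSurplus M)
    {e : κ' → κ} (he : Injective e) : HasSurplus (M ∘ e) := by
  intro S hS
  have h := hM _ (hS.map (f := ⟨e, he⟩))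
  have heq : rowsSupport M (S.map ⟨e, he⟩) = rowsSupport (M ∘ e) S := by
    ext j
    simp [rowsSupport]
  rwa [Finset.card_map, heq] at h

/-- Rows can be appended one at a time, each avoiding the bad vectors for the previous rows. -/
theorem pow_le_card_hasSurplus [Finite ι] [Finite F] {c k : ℕ}
    (hc : (c : ℤ) ≤ (Nat.card F : ℤ) ^ Nat.card ι - ((Nat.card F : ℤ) - 1) *
      ((Nat.card ι : ℤ) - k) - (Nat.card F : ℤ) ^ k) (κ : Type*) [Finite κ]
    (hκ : Nat.card κ ≤ k) :
    c ^ Nat.card κ ≤ Nat.card {M : κ → ι → F // HasSurplus M} := by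
  revert hκ
  refine Finite.induction_empty_option
    (P := fun κ => Nat.card κ ≤ k → c ^ Nat.card κ ≤ Nat.card {M : κ → ι → F // HasSurplus M})
    ?_ ?_ ?_ κ
  · intro α β e ih hβ
    rw [← Nat.card_congr e] at hβ ⊢
    refine (ih hβ).trans_eq (Nat.card_congr ?_)
    refine (e.arrowCongr (Equiv.refl (ι → F))).subtypeEquiv fun M => ⟨fun hM => ?_, fun hM => ?_⟩
    · exact hM.comp_injective e.symm.injective
    · have := hM.comp_injective e.injective
      convert this using 1
      ext i j
      simp
  · intro _
    have : Nonempty {M : PEmpty → ι → F // HasSurplus M} :=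
      ⟨PEmpty.elim, fun S ⟨i, _⟩ => i.elim⟩
    rw [Nat.card_of_isEmpty, pow_zero]
    have : Finite {M : PEmpty → ι → F // HasSurplus M} := Subtype.finite
    exact Nat.card_pos
  · intro α _ ih hα
    rw [Finite.card_option] at hα ⊢
    have := Fintype.ofFinite {M : α → ι → F // HasSurplus M}
    let f : (Σ M : {M : α → ι → F // HasSurplus M}, ↥(badRows M.1)ᶜ) →
        {M : Option α → ι → F // HasSurplus M} :=
      fun p => ⟨fun o => o.elim p.2.1 p.1.1, hasSurplus_optionElim p.1.2 p.2.2⟩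
    have hf : Injective f := by
      rintro ⟨⟨M, hM⟩, v, hv⟩ ⟨⟨M', hM'⟩, v', hv'⟩ h
      have h' := congrArg Subtype.val h
      have h1 : v = v' := congrFun h' none
      have h2 : M = M' := funext fun i => congrFun h' (some i)
      subst h1 h2
      rfl
    refine le_trans ?_ (Nat.card_le_card_of_injective f hf)
    rw [Nat.card_sigma]
    have hterm (M : {M : α → ι → F // HasSurplus M}) : c ≤ Nat.card ↥(badRows M.1)ᶜ := by
      have h1 := ncard_badRows_le M.2 (k := k) (by omega)
      have h2 := Set.ncard_add_ncard_compl (badRows M.1)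
      rw [Nat.card_fun] at h2
      rw [Nat.card_coe_set_eq]
      zify at h2 ⊢
      linarith
    calc c ^ (Nat.card α + 1) = c ^ Nat.card α * c := pow_succ _ _
      _ ≤ Nat.card {M : α → ι → F // HasSurplus M} * c := Nat.mul_le_mul_right _ (ih (by omega))
      _ = ∑ _M : {M : α → ι → F // HasSurplus M}, c := by
          rw [Finset.sum_const, Finset.card_univ, Nat.card_eq_fintype_card, smul_eq_mul]
      _ ≤ _ := Finset.sum_le_sum fun M _ => hterm M

end Surplus

section StrongCover

variable {F : Type*} [Field F]

/-- The rows in `X` together with the columns in `Y` cover `A`, and the rows in `X` outside the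
columns in `Y`, as well as the columns in `Y` outside the rows in `X`, have the surplus property. -/
def IsStrongCover {α β : Type*} (A : α → β → F) (X : Finset α) (Y : Finset β) : Prop :=
  (∀ i ∉ X, ∀ j ∉ Y, A i j = 0) ∧
    HasSurplus (fun (i : X) (j : {j // j ∉ Y}) => A i j) ∧
    HasSurplus (fun (j : Y) (i : {i // i ∉ X}) => A i j)

theorem HasSurplus.subset_or_card_sdiff_lt {α β : Type*} [DecidableEq α] [DecidableEq β]
    {A : α → β → F} {X X' : Finset α} {Y Y' : Finset β}
    (h : HasSurplus (fun (i : X) (j : {j // j ∉ Y}) => A i j))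
    (hcov : ∀ i j, A i j ≠ 0 → i ∈ X' ∨ j ∈ Y') :
    X ⊆ X' ∨ (X \ X').card < (Y' \ Y).card := by
  by_cases hX : X ⊆ X'
  · exact Or.inl hX
  right
  let S : Finset X := (X \ X').subtype (· ∈ X)
  have hcard : S.card = (X \ X').card := by
    rw [Finset.card_subtype, Finset.filter_true_of_mem]
    exact fun i hi => (Finset.mem_sdiff.1 hi).1
  have hne : S.Nonempty := by
    rw [← Finset.card_pos, hcard, Finset.card_pos]
    exact Finset.sdiff_nonempty.2 hX
  refine hcard ▸ (h S hne).trans_le ?_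
  rw [← Set.ncard_image_of_injective _ Subtype.val_injective, ← Set.ncard_coe_finset]
  refine Set.ncard_le_ncard ?_
  rintro _ ⟨j, ⟨i, hi, hij⟩, rfl⟩
  have hi' : i.1 ∉ X' := (Finset.mem_sdiff.1 (Finset.mem_subtype.1 hi)).2
  exact Finset.mem_coe.2 (Finset.mem_sdiff.2 ⟨(hcov _ _ hij).resolve_left hi', j.2⟩)

theorem IsStrongCover.card_le_and_eq {α β : Type*} {A : α → β → F} {X X' : Finset α}
    {Y Y' : Finset β} (h : IsStrongCover A X Y) (hcov : ∀ i j, A i j ≠ 0 → i ∈ X' ∨ j ∈ Y') :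
    X.card + Y.card ≤ X'.card + Y'.card ∧
      (X'.card + Y'.card = X.card + Y.card → X = X' ∧ Y = Y') := by
  classical
  have h1 := h.2.1.subset_or_card_sdiff_lt hcov
  have h2 := HasSurplus.subset_or_card_sdiff_lt (A := fun j i => A i j) h.2.2
    (fun j i hij => (hcov i j hij).symm)
  have e1 := Finset.card_sdiff_add_card_inter X X'
  have e2 := Finset.card_sdiff_add_card_inter X' X
  have e3 := Finset.card_sdiff_add_card_inter Y Y'
  have e4 := Finset.card_sdiff_add_card_inter Y' Y
  rw [Finset.inter_comm] at e2 e4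
  have z1 : X ⊆ X' → (X \ X').card = 0 := fun h => by simp [Finset.sdiff_eq_empty_iff_subset.2 h]
  have z2 : Y ⊆ Y' → (Y \ Y').card = 0 := fun h => by simp [Finset.sdiff_eq_empty_iff_subset.2 h]
  refine ⟨by grind, fun heq => ?_⟩
  have hX : X ⊆ X' := by grind
  have hY : Y ⊆ Y' := by grind
  have hX' := Finset.card_le_card hX
  have hY' := Finset.card_le_card hY
  exact ⟨Finset.eq_of_subset_of_card_le hX (by omega), Finset.eq_of_subset_of_card_le hY (by omega)⟩

theorem IsStrongCover.covers {α β : Type*} {A : α → β → F} {X : Finset α} {Y : Finset β}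
    (h : IsStrongCover A X Y) (i : α) (j : β) (hij : A i j ≠ 0) : i ∈ X ∨ j ∈ Y := by
  by_contra! hcon
  exact hij (h.1 i hcon.1 j hcon.2)

theorem IsStrongCover.coverWt_eq {m n : ℕ} {A : Matrix (Fin m) (Fin n) F} {X : Finset (Fin m)}
    {Y : Finset (Fin n)} (h : IsStrongCover A X Y) : coverWt A = X.card + Y.card := by
  refine IsLeast.csInf_eq ⟨⟨X.disjSum Y, fun i j hij => ?_, Finset.card_disjSum _ _⟩, ?_⟩
  · simpa using h.covers i j hij
  · rintro _ ⟨S, hS, rfl⟩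
    rw [← S.card_toLeft_add_card_toRight]
    exact (h.card_le_and_eq fun i j hij => by simpa using hS i j hij).1

theorem IsStrongCover.unique {α β : Type*} {A : α → β → F} {X X' : Finset α} {Y Y' : Finset β}
    (h : IsStrongCover A X Y) (h' : IsStrongCover A X' Y')
    (hcard : X'.card + Y'.card = X.card + Y.card) : X = X' ∧ Y = Y' :=
  (h.card_le_and_eq h'.covers).2 hcard

theorem card_mul_card_hasSurplus_le {α β : Type*} [Finite α] [Finite β] [Finite F]
    (X : Finset α) (Y : Finset β) :
    Nat.card F ^ (X.card * Y.card) *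
        Nat.card {M : X → {j // j ∉ Y} → F // HasSurplus M} *
        Nat.card {M : Y → {i // i ∉ X} → F // HasSurplus M} ≤
      Nat.card {A : α → β → F // IsStrongCover A X Y} := by
  classical
  let glue (B : X × Y → F) (R : X → {j // j ∉ Y} → F) (C : Y → {i // i ∉ X} → F) : α → β → F :=
    fun i j => if hi : i ∈ X then if hj : j ∈ Y then B (⟨i, hi⟩, ⟨j, hj⟩) else R ⟨i, hi⟩ ⟨j, hj⟩
      else if hj : j ∈ Y then C ⟨j, hj⟩ ⟨i, hi⟩ else 0
  have hB (B R C) (i : X) (j : Y) : glue B R C i j = B (i, j) := by simp [glue]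
  have hR (B R C) (i : X) (j : {j // j ∉ Y}) : glue B R C i j = R i j := by simp [glue, j.2]
  have hC (B R C) (j : Y) (i : {i // i ∉ X}) : glue B R C i j = C j i := by simp [glue, i.2]
  let f : ((X × Y → F) × {M : X → {j // j ∉ Y} → F // HasSurplus M}) ×
      {M : Y → {i // i ∉ X} → F // HasSurplus M} → {A : α → β → F // IsStrongCover A X Y} :=
    fun p => ⟨glue p.1.1 p.1.2 p.2, fun i hi j hj => by simp [glue, hi, hj],
      by simpa only [hR] using p.1.2.2, by simpa only [hC] using p.2.2⟩
  have hf : Injective f := by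
    rintro ⟨⟨B, R, hRs⟩, C, hCs⟩ ⟨⟨B', R', hRs'⟩, C', hCs'⟩ h
    have h' : glue B R C = glue B' R' C' := congrArg Subtype.val h
    have h1 : B = B' := by
      funext ⟨i, j⟩
      rw [← hB B R C, h', hB]
    have h2 : R = R' := by
      funext i j
      rw [← hR B R C, h', hR]
    have h3 : C = C' := by
      funext j i
      rw [← hC B R C, h', hC]
    subst h1 h2 h3
    rfl
  have h := Nat.card_le_card_of_injective f hf
  simpa [Nat.card_prod, Nat.card_fun] using h

theorem pow_mul_pow_mul_pow_le_card_isStrongCover [Fintype F] {m n t tx : ℕ} (htx : tx ≤ t)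
    (htn : t ≤ n) (htm : t ≤ m) {X : Finset (Fin m)} {Y : Finset (Fin n)} (hX : X.card = tx)
    (hY : Y.card = t - tx) :
    (Nat.card F : ℤ) ^ (tx * (t - tx)) *
        ((Nat.card F : ℤ) ^ (n - (t - tx)) - ((Nat.card F : ℤ) - 1) * ((n : ℤ) - t) -
          (Nat.card F : ℤ) ^ tx) ^ tx *
        ((Nat.card F : ℤ) ^ (m - tx) - ((Nat.card F : ℤ) - 1) * ((m : ℤ) - t) -
          (Nat.card F : ℤ) ^ (t - tx)) ^ (t - tx) ≤
      (Nat.card {A : Fin m → Fin n → F // IsStrongCover A X Y} : ℤ) := by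
  have hF : (1 : ℤ) ≤ Nat.card F := by exact_mod_cast Nat.card_pos (α := F)
  have hcn : Nat.card {j // j ∉ Y} = n - (t - tx) := by
    simp [Nat.card_eq_fintype_card, Fintype.card_subtype_compl, hY]
  have hcm : Nat.card {i // i ∉ X} = m - tx := by
    simp [Nat.card_eq_fintype_card, Fintype.card_subtype_compl, hX]
  have en : (n : ℤ) - t = ((n - (t - tx) : ℕ) : ℤ) - tx := by omega
  have em : (m : ℤ) - t = ((m - tx : ℕ) : ℤ) - (t - tx : ℕ) := by omega
  rw [en, em]
  have hn := sub_one_mul_sub_add_pow_le_pow hF (show tx ≤ n - (t - tx) by omega)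
  have hm := sub_one_mul_sub_add_pow_le_pow hF (show t - tx ≤ m - tx by omega)
  obtain ⟨c, hc⟩ := Int.eq_ofNat_of_zero_le (sub_nonneg.2 hn)
  obtain ⟨d, hd⟩ := Int.eq_ofNat_of_zero_le (sub_nonneg.2 hm)
  rw [← sub_sub] at hc hd
  have h1 := pow_le_card_hasSurplus (F := F) (ι := {j // j ∉ Y}) (c := c) (k := tx)
    (by rw [hcn, hc]) X (by simp [hX])
  have h2 := pow_le_card_hasSurplus (F := F) (ι := {i // i ∉ X}) (c := d) (k := t - tx)
    (by rw [hcm, hd]) Y (by simp [hY])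
  have h3 := card_mul_card_hasSurplus_le (F := F) X Y
  rw [hX, hY] at h3
  simp only [Nat.card_eq_fintype_card, Fintype.card_coe, hX, hY] at h1 h2
  rw [hc, hd]
  norm_cast
  refine le_trans ?_ h3
  simp only [Nat.card_eq_fintype_card]
  gcongr

end StrongCover

/-- Lower bound on the size of the cover-metric sphere `F_C(n,m,q,t)`:
`F_C(n,m,q,t) ≥ Σ_{t_x+t_y=t} C(m,t_x)·C(n,t_y)·q^{t_x t_y}·
(q^{n−t_y} − (q−1)(n−t) − q^{t_x})^{t_x}·(q^{m−t_x} − (q−1)(m−t) − q^{t_y})^{t_y}`. -/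
theorem coverSphere_lower_bound {F : Type*} [Field F] [Fintype F] {q m n t : ℕ}
    (hq : Fintype.card F = q) (ht : 0 < t) (htn : t ≤ n) (htm : t ≤ m) :
    (∑ tx ∈ Finset.range (t + 1),
        (m.choose tx : ℤ) * (n.choose (t - tx) : ℤ) * (q : ℤ) ^ (tx * (t - tx)) *
          ((q : ℤ) ^ (n - (t - tx)) - ((q : ℤ) - 1) * ((n : ℤ) - t) - (q : ℤ) ^ tx) ^ tx *
          ((q : ℤ) ^ (m - tx) - ((q : ℤ) - 1) * ((m : ℤ) - t) - (q : ℤ) ^ (t - tx)) ^ (t - tx)) ≤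
      (Nat.card {A : Matrix (Fin m) (Fin n) F | coverWt A = t} : ℤ) := by
  classical
  rw [← Nat.card_eq_fintype_card] at hq
  subst hq
  let P : Finset (Finset (Fin m) × Finset (Fin n)) := {p | p.1.card + p.2.card = t}
  have hP (p) : p ∈ P ↔ p.1.card + p.2.card = t := by simp [P]
  let f : (Σ p : P, {A : Fin m → Fin n → F // IsStrongCover A p.1.1 p.1.2}) →
      {A : Matrix (Fin m) (Fin n) F | coverWt A = t} :=
    fun a => ⟨a.2.1, a.2.2.coverWt_eq.trans ((hP _).1 a.1.2)⟩
  have hf : Injective f := by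
    rintro ⟨⟨⟨X, Y⟩, hXY⟩, A, hA⟩ ⟨⟨⟨X', Y'⟩, hXY'⟩, A', hA'⟩ h
    have hAA' : A = A' := congrArg Subtype.val h
    subst hAA'
    obtain ⟨rfl, rfl⟩ := hA.unique hA' (((hP _).1 hXY').trans ((hP _).1 hXY).symm)
    rfl
  have hcard := Nat.card_le_card_of_injective f hf
  rw [Nat.card_sigma, Finset.sum_coe_sort P
    (fun p => Nat.card {A : Fin m → Fin n → F // IsStrongCover A p.1 p.2})] at hcard
  refine le_trans ?_ (Nat.cast_le.2 hcard)
  have hmaps (p) (hp : p ∈ P) : p.1.card ∈ Finset.range (t + 1) := by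
    have := (hP p).1 hp
    rw [Finset.mem_range]
    omega
  rw [← Finset.sum_fiberwise_of_maps_to hmaps, Nat.cast_sum]
  refine Finset.sum_le_sum fun tx htx => ?_
  have htx : tx ≤ t := Nat.lt_succ_iff.1 (Finset.mem_range.1 htx)
  have hfiber : {p ∈ P | p.1.card = tx} =
      Finset.powersetCard tx Finset.univ ×ˢ Finset.powersetCard (t - tx) Finset.univ := by
    ext p
    simp only [Finset.mem_filter, hP, Finset.mem_product, Finset.mem_powersetCard,
      Finset.subset_univ, true_and]
    omega
  rw [hfiber, Nat.cast_sum]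
  have hsum := Finset.card_nsmul_le_sum
    (Finset.powersetCard tx Finset.univ ×ˢ Finset.powersetCard (t - tx) Finset.univ)
    (fun p : Finset (Fin m) × Finset (Fin n) =>
      (Nat.card {A : Fin m → Fin n → F // IsStrongCover A p.1 p.2} : ℤ)) _
    (fun p hp => pow_mul_pow_mul_pow_le_card_isStrongCover htx htn htm
      (Finset.mem_powersetCard.1 (Finset.mem_product.1 hp).1).2
      (Finset.mem_powersetCard.1 (Finset.mem_product.1 hp).2).2)
  refine le_trans (le_of_eq ?_) hsum
  rw [Finset.card_product, Finset.card_powersetCard, Finset.card_powersetCard, Finset.card_univ,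
    Finset.card_univ, Fintype.card_fin, Fintype.card_fin, nsmul_eq_mul]
  push_cast
  ring
end

section
/- For every positive integer k, ⌈k/⌈√k⌉ + ⌈√k⌉⌉ ≤ ⌈k + (√k+1)²)/√k⌉ ≤ ⌈2√k⌉ + 3. Consequently, for positive integers k, n, m with ⌈√k⌉ < m, the choice t̂_x = m − ⌈√k⌉ satisfies ⌊t̂_x + n − k/(m−t̂_x)⌋ ≥ m + n − ⌈2√k⌉ − 3. -/
/-- Rounding up the minimiser `√x` of `c ↦ x / c + c` costs at most `1`. -/
theorem div_natCeil_sqrt_add_natCeil_sqrt_le {x : ℝ} (hx : 0 < x) :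
    x / ⌈√x⌉₊ + ⌈√x⌉₊ ≤ 2 * √x + 1 := by
  have hs : 0 < √x := Real.sqrt_pos.2 hx
  have hdiv : x / ⌈√x⌉₊ ≤ √x :=
    (div_le_div_of_nonneg_left hx.le hs (Nat.le_ceil _)).trans_eq Real.div_sqrt
  have hceil := Nat.ceil_lt_add_one hs.le
  linarith

/-- Expansion of `(x + (√x + 1)²) / √x`. -/
theorem add_sqrt_add_one_sq_div_sqrt {x : ℝ} (hx : 0 < x) :
    (x + (√x + 1) ^ 2) / √x = 2 * √x + 2 + 1 / √x := by
  have hs : 0 < √x := Real.sqrt_pos.2 hx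
  field_simp
  linear_combination -Real.sq_sqrt hx.le

/-- Arithmetic estimate for the lower bound on the success probability of the
Prange-like decoder: `⌈k/⌈√k⌉ + ⌈√k⌉⌉ ≤ ⌈(k + (√k+1)²)/√k⌉ ≤ ⌈2√k⌉ + 3`;
consequently, for `⌈√k⌉ < m`, the choice `t̂_x = m − ⌈√k⌉` satisfies
`⌊t̂_x + n − k/(m−t̂_x)⌋ ≥ m + n − ⌈2√k⌉ − 3`. -/
theorem prange_success_lower_bound (k n m : ℕ) (hk : 0 < k)
    (hm : ⌈Real.sqrt k⌉₊ < m) :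
    ⌈(k : ℝ) / (⌈Real.sqrt k⌉₊ : ℝ) + (⌈Real.sqrt k⌉₊ : ℝ)⌉ ≤
      ⌈((k : ℝ) + (Real.sqrt k + 1) ^ 2) / Real.sqrt k⌉ ∧
    ⌈((k : ℝ) + (Real.sqrt k + 1) ^ 2) / Real.sqrt k⌉ ≤ ⌈2 * Real.sqrt k⌉ + 3 ∧
    (m : ℤ) + n - ⌈2 * Real.sqrt k⌉ - 3 ≤
      ⌊((m - ⌈Real.sqrt k⌉₊ : ℕ) : ℝ) + n -
        (k : ℝ) / ((m - (m - ⌈Real.sqrt k⌉₊) : ℕ) : ℝ)⌋ := by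
  have hk0 : (0 : ℝ) < k := Nat.cast_pos.2 hk
  have hs : 1 ≤ √(k : ℝ) := Real.one_le_sqrt.2 (Nat.one_le_cast.2 hk)
  have hmin := div_natCeil_sqrt_add_natCeil_sqrt_le hk0
  have hinv_nonneg : 0 ≤ 1 / √(k : ℝ) := by positivity
  have hinv_le : 1 / √(k : ℝ) ≤ 1 := div_le_one_of_le₀ hs (by positivity)
  have hceil := Int.le_ceil (2 * √(k : ℝ))
  rw [add_sqrt_add_one_sq_div_sqrt hk0]
  refine ⟨Int.ceil_le_ceil (by linarith), Int.ceil_le.2 ?_, Int.le_floor.2 ?_⟩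
  · push_cast
    linarith
  · rw [Nat.sub_sub_self hm.le, Nat.cast_sub hm.le]
    push_cast
    linarith
end
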